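/- Let G be a finite simple graph, let η, k ∈ ℕ, let S ⊆ V(G) with |S| ≤ k, and let F be a treedepth decomposition of G − S of depth at most η. Let x, y ∈ V(G) ∖ S be distinct vertices such that either xy ∈ E(G), or every (x,y)-vertex cut in G has size at least k + η + 1. Then x is an ancestor of y in F or y is an ancestor of x in F. Consequently, if W ⊆ V(G) ∖ S is a set of vertices such that every pair of distinct vertices of W satisfies this condition, then all vertices of W lie on a single root-to-leaf path of F and |W| ≤ η. -/

import Mathlib

open SimpleGraph Set

variable {V : Type*}

/-- The connected component of `x` inside the induced subgraph `G[S]`, as a subset of `V`. -/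
def compIn (G : SimpleGraph V) (S : Set V) (x : V) : Set V :=
  {y | ∃ (hx : x ∈ S) (hy : y ∈ S), (G.induce S).Reachable ⟨x, hx⟩ ⟨y, hy⟩}

/-- `tdLE G n S` means that the treedepth of the induced subgraph `G[S]` is at most `n`,
following the recursive definition of treedepth: a graph has treedepth at most `n+1`
iff from every connected component one can delete a vertex leaving a graph of
treedepth at most `n`; only the empty graph has treedepth at most `0`. -/
def tdLE (G : SimpleGraph V) : ℕ → Set V → Prop
  | 0, S => S = ∅
  | n+1, S => ∀ x ∈ S, ∃ v ∈ compIn G S x, tdLE G n (compIn G S x \ {v})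

/-- The treedepth of the induced subgraph `G[S]`. -/
noncomputable def td (G : SimpleGraph V) (S : Set V) : ℕ :=
  sInf {n | tdLE G n S}

/-- `N_G(C)`: the set of vertices outside `C` having a neighbor in `C`. -/
def nbhd (G : SimpleGraph V) (C : Set V) : Set V :=
  {v | v ∉ C ∧ ∃ u ∈ C, G.Adj u v}

/-- `C` is a connected component of the induced subgraph `G[R]`. -/
def IsCompOf (G : SimpleGraph V) (R C : Set V) : Prop :=
  ∃ x ∈ R, C = compIn G R x

/-- `S` is an `η`-treedepth deletion set of `G`: `td(G − S) ≤ η`. -/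
def IsTDS (G : SimpleGraph V) (η : ℕ) (S : Set V) : Prop :=
  td G Sᶜ ≤ η

/-- `S` is a connected `η`-treedepth deletion set of `G`. -/
def IsCTDS (G : SimpleGraph V) (η : ℕ) (S : Set V) : Prop :=
  IsTDS G η S ∧ S.Nonempty ∧ (G.induce S).Connected

/-- A rooted forest with vertex set `A ⊆ V`, given by its (reflexive) ancestor relation:
`anc u v` means `u` is an ancestor of `v` (every vertex being an ancestor of itself). -/
structure RootedForest (V : Type*) (A : Set V) where
  anc : V → V → Prop
  mem_left : ∀ {u v}, anc u v → u ∈ A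
  mem_right : ∀ {u v}, anc u v → v ∈ A
  refl : ∀ v ∈ A, anc v v
  trans : ∀ {u v w}, anc u v → anc v w → anc u w
  antisymm : ∀ {u v}, anc u v → anc v u → u = v
  chain : ∀ {u w v}, anc u v → anc w v → anc u w ∨ anc w u

/-- Depth of a rooted forest: the maximum number of vertices on a root-to-leaf path,
i.e. the maximum number of ancestors of a vertex. -/
noncomputable def RootedForest.depth [Fintype V] {A : Set V} (F : RootedForest V A) : ℕ :=
  Finset.univ.sup fun v : V => {u | F.anc u v}.ncard

/-- `F` is a treedepth decomposition of `G[A]`: the endpoints of every edge of `G[A]`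
are in ancestor-descendant relation in `F`. -/
def IsTDDecompOn (G : SimpleGraph V) (A : Set V) (F : RootedForest V A) : Prop :=
  ∀ u v, u ∈ A → v ∈ A → G.Adj u v → F.anc u v ∨ F.anc v u

/-- `A` is an `(x,y)`-vertex cut in `G`: `A` avoids `x` and `y` and there is
no path from `x` to `y` in `G − A`. -/
def IsVertexCut (G : SimpleGraph V) (x y : V) (A : Set V) : Prop :=
  ∃ (hx : x ∈ Aᶜ) (hy : y ∈ Aᶜ), ¬ (G.induce Aᶜ).Reachable ⟨x, hx⟩ ⟨y, hy⟩

/-- The weight of a subgraph: the sum of the weights of its edges. -/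
noncomputable def subWeight (w : Sym2 V → ℕ) {G : SimpleGraph V} (T : G.Subgraph) : ℕ :=
  ∑ᶠ e ∈ T.edgeSet, w e

/-- The leaves (vertices with exactly one neighbor) of a subgraph. -/
def subLeaves {G : SimpleGraph V} (T : G.Subgraph) : Set V :=
  {v | (T.neighborSet v).ncard = 1}

/-- `T` is a Steiner tree for the terminal set `R` in `G`. -/
def IsSteinerTree (G : SimpleGraph V) (R : Set V) (T : G.Subgraph) : Prop :=
  T.coe.IsTree ∧ R ⊆ T.verts

/-- `T` is a `t`-component for `R`: a tree with at most `t` leaves, all of which lie in `R`. -/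
def IsTComponent (G : SimpleGraph V) (R : Set V) (t : ℕ) (T : G.Subgraph) : Prop :=
  T.coe.IsTree ∧ (subLeaves T).ncard ≤ t ∧ subLeaves T ⊆ R

/-!
If neither of `x`, `y` is an ancestor of the other, consider the part of `F` hanging below the
ancestors of `x` that are not ancestors of `y`. It contains `x` but not `y`, and since edges of
`G - S` join ancestors to descendants, its neighbours outside `S` are common ancestors of `x` and
`y`. So `S` together with the common ancestors is an `(x,y)`-vertex cut. The common ancestors are
ancestors of `x` other than `x` itself, so there are fewer than `η` of them and the cut has fewer
than `k + η` vertices. A set of pairwise comparable vertices consists of ancestors of its deepest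
member, which number at most `η`.
-/

/-- No `(x,y)`-vertex cut of `G` has fewer than `m` vertices. Adjacent vertices admit no vertex cut
at all, so this also covers the alternative `xy ∈ E(G)`. Sizes are measured by `Set.encard`, which,
unlike `Set.ncard`, is not `0` on infinite cuts. -/
def IsInseparable (G : SimpleGraph V) (m : ℕ∞) (x y : V) : Prop :=
  ∀ A, IsVertexCut G x y A → m ≤ A.encard

section VertexCut

variable {G : SimpleGraph V} {x y : V} {A : Set V}

theorem IsVertexCut.not_adj (h : IsVertexCut G x y A) : ¬ G.Adj x y := by
  obtain ⟨hx, hy, hxy⟩ := h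
  exact fun hadj => hxy (Adj.reachable (induce_adj.2 hadj))

theorem isVertexCut_of_nbhd_subset {C : Set V} (hxA : x ∉ A) (hyA : y ∉ A)
    (hxC : x ∈ C) (hyC : y ∉ C) (hCA : nbhd G C ⊆ A) : IsVertexCut G x y A := by
  refine ⟨hxA, hyA, ?_⟩
  rintro ⟨p⟩
  obtain ⟨d, -, hfst, hsnd⟩ := p.exists_boundary_dart (Subtype.val ⁻¹' C) hxC hyC
  exact d.snd.2 (hCA ⟨hsnd, d.fst, hfst, d.adj⟩)

theorem isInseparable_of_adj_or_le_ncard {m : ℕ∞} {n : ℕ} (hmn : m ≤ n)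
    (h : G.Adj x y ∨ ∀ A, IsVertexCut G x y A → n ≤ A.ncard) : IsInseparable G m x y := by
  intro A hA
  have hn : n ≤ A.ncard := h.resolve_left hA.not_adj A hA
  exact hmn.trans ((Nat.cast_le.2 hn).trans A.ncard_le_encard)

end VertexCut

namespace RootedForest

section Ancestors

variable {A W : Set V} (F : RootedForest V A) {x y : V} {η : ℕ}

/-- The set of ancestors of `v`, that is, the vertices of the path from a root to `v`;
its size is the depth of `v` in the forest. -/
def ancestors (v : V) : Set V :=
  {u | F.anc u v}

variable {F}

theorem ancestors_subset_ancestors (h : F.anc x y) : F.ancestors x ⊆ F.ancestors y :=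
  fun _ hu => F.trans hu h

theorem encard_ancestors_le_depth [Fintype V] (v : V) : (F.ancestors v).encard ≤ F.depth := by
  rw [← (toFinite (F.ancestors v)).cast_ncard_eq, Nat.cast_le]
  exact Finset.le_sup (f := fun v => (F.ancestors v).ncard) (Finset.mem_univ v)

theorem encard_ancestors_inter_ancestors_lt (hx : x ∈ A) (hxy : ¬ F.anc x y)
    (hη : (F.ancestors x).encard ≤ η) : (F.ancestors x ∩ F.ancestors y).encard < η := by
  have hssubset : F.ancestors x ∩ F.ancestors y ⊂ F.ancestors x :=
    inter_subset_left.ssubset_of_mem_notMem (F.refl x hx) fun h => hxy h.2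
  have hfin : (F.ancestors x ∩ F.ancestors y).Finite :=
    (finite_of_encard_le_coe hη).subset inter_subset_left
  exact (hfin.encard_lt_encard hssubset).trans_le hη

theorem exists_mem_subset_ancestors (hWA : W ⊆ A) (hne : W.Nonempty)
    (hη : ∀ v ∈ W, (F.ancestors v).encard ≤ η)
    (hcomp : ∀ x ∈ W, ∀ y ∈ W, F.anc x y ∨ F.anc y x) : ∃ v ∈ W, W ⊆ F.ancestors v := by
  have hbdd : ((fun v => (F.ancestors v).ncard) '' W).Finite :=
    (finite_Iic η).subset <| image_subset_iff.2 fun v hv =>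
      (encard_le_coe_iff_finite_ncard_le.1 (hη v hv)).2
  obtain ⟨v, hv, hdeepest⟩ := hbdd.exists_maximalFor' _ _ hne
  refine ⟨v, hv, fun x hx => (hcomp x hx v hv).elim id fun hvx => ?_⟩
  have hsubset : F.ancestors v ⊆ F.ancestors x := ancestors_subset_ancestors hvx
  have hcard : (F.ancestors x).ncard ≤ (F.ancestors v).ncard :=
    hdeepest hx (ncard_le_ncard hsubset (finite_of_encard_le_coe (hη x hx)))
  rw [eq_of_subset_of_ncard_le hsubset hcard (finite_of_encard_le_coe (hη x hx))]
  exact F.refl x (hWA hx)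

theorem encard_le_of_forall_anc_or_anc (hWA : W ⊆ A)
    (hη : ∀ v ∈ W, (F.ancestors v).encard ≤ η)
    (hcomp : ∀ x ∈ W, ∀ y ∈ W, F.anc x y ∨ F.anc y x) : W.encard ≤ η := by
  obtain rfl | hne := W.eq_empty_or_nonempty
  · simp
  · obtain ⟨v, hv, hsubset⟩ := exists_mem_subset_ancestors hWA hne hη hcomp
    exact (encard_le_encard hsubset).trans (hη v hv)

end Ancestors

section Branch

variable {G : SimpleGraph V} {S : Set V} {F : RootedForest V Sᶜ} {x y : V} {η k : ℕ}

/-- The branch of `F` that splits off towards `x` from the path leading to `y`: the descendants of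
those ancestors of `x` that are not ancestors of `y`. It is the side of `x` in the vertex cut formed
by `S` and the common ancestors of `x` and `y`. -/
def branch {A : Set V} (F : RootedForest V A) (x y : V) : Set V :=
  {v | ∃ w, F.anc w x ∧ ¬ F.anc w y ∧ F.anc w v}

theorem nbhd_branch_subset (hF : IsTDDecompOn G Sᶜ F) :
    nbhd G (F.branch x y) ⊆ S ∪ (F.ancestors x ∩ F.ancestors y) := by
  rintro v ⟨hv, u, ⟨w, hwx, hwy, hwu⟩, hadj⟩
  refine or_iff_not_imp_left.2 fun hvS => ?_
  have hnwv : ¬ F.anc w v := fun hwv => hv ⟨w, hwx, hwy, hwv⟩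
  have hvu : F.anc v u :=
    (hF u v (F.mem_right hwu) hvS hadj).resolve_left fun huv => hnwv (F.trans hwu huv)
  have hvw : F.anc v w := (F.chain hwu hvu).resolve_left hnwv
  have hvx : F.anc v x := F.trans hvw hwx
  exact ⟨hvx, by_contra fun hvy => hv ⟨v, hvx, hvy, F.refl v hvS⟩⟩

theorem isVertexCut_union_ancestors_inter_ancestors (hF : IsTDDecompOn G Sᶜ F)
    (hx : x ∉ S) (hy : y ∉ S) (hxy : ¬ F.anc x y) (hyx : ¬ F.anc y x) :
    IsVertexCut G x y (S ∪ (F.ancestors x ∩ F.ancestors y)) := by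
  have hx_branch : x ∈ F.branch x y := ⟨x, F.refl x hx, hxy, F.refl x hx⟩
  have hy_branch : y ∉ F.branch x y := fun ⟨_, _, hwy, hwy'⟩ => hwy hwy'
  exact isVertexCut_of_nbhd_subset (fun h => h.elim hx fun h => hxy h.2)
    (fun h => h.elim hy fun h => hyx h.1) hx_branch hy_branch (nbhd_branch_subset hF)

theorem anc_or_anc_of_isInseparable (hS : S.encard ≤ k) (hF : IsTDDecompOn G Sᶜ F)
    (hη : (F.ancestors x).encard ≤ η) (hx : x ∉ S) (hy : y ∉ S)
    (h : IsInseparable G (k + η) x y) : F.anc x y ∨ F.anc y x := by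
  by_contra! ⟨hxy, hyx⟩
  have hcut := isVertexCut_union_ancestors_inter_ancestors hF hx hy hxy hyx
  refine (h _ hcut).not_gt ?_
  calc (S ∪ (F.ancestors x ∩ F.ancestors y)).encard
      ≤ S.encard + (F.ancestors x ∩ F.ancestors y).encard := encard_union_le _ _
    _ ≤ k + (F.ancestors x ∩ F.ancestors y).encard := by gcongr
    _ < k + η := (ENat.add_lt_add_iff_left (ENat.natCast_ne_top k)).2
        (encard_ancestors_inter_ancestors_lt hx hxy hη)

end Branch

end RootedForest

theorem stmt4_general (G : SimpleGraph V) (η k : ℕ) (S : Set V) (hSk : S.encard ≤ k)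
    (F : RootedForest V Sᶜ) (hF : IsTDDecompOn G Sᶜ F)
    (hdepth : ∀ v, (F.ancestors v).encard ≤ η) :
    (∀ x y, x ∈ Sᶜ → y ∈ Sᶜ → IsInseparable G (k + η) x y → F.anc x y ∨ F.anc y x) ∧
    (∀ W : Set V, W ⊆ Sᶜ → W.Pairwise (IsInseparable G (k + η)) →
      (∀ x ∈ W, ∀ y ∈ W, F.anc x y ∨ F.anc y x) ∧ W.encard ≤ η) := by
  have hpair : ∀ x y, x ∈ Sᶜ → y ∈ Sᶜ → IsInseparable G (k + η) x y → F.anc x y ∨ F.anc y x :=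
    fun x y hx hy => RootedForest.anc_or_anc_of_isInseparable hSk hF (hdepth x) hx hy
  refine ⟨hpair, fun W hW hinsep => ?_⟩
  have hcomp : ∀ x ∈ W, ∀ y ∈ W, F.anc x y ∨ F.anc y x := by
    intro x hx y hy
    obtain rfl | hne := eq_or_ne x y
    · exact Or.inl (F.refl x (hW hx))
    · exact hpair x y (hW hx) (hW hy) (hinsep hx hy hne)
  exact ⟨hcomp, RootedForest.encard_le_of_forall_anc_or_anc hW (fun v _ => hdepth v) hcomp⟩

/-- let `F` be a treedepth decomposition of `G − S` of depth at most `η`,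
`|S| ≤ k`. If `x ≠ y` outside `S` are adjacent or every `(x,y)`-vertex cut has size at
least `k + η + 1`, then `x` and `y` are in ancestor-descendant relation in `F`.
Consequently, any set `W ⊆ V(G) ∖ S` all of whose pairs satisfy this condition lies on a
single root-to-leaf path of `F` (is pairwise ancestor-comparable) and has at most `η`
vertices. -/
theorem stmt4 {V : Type*} [Fintype V] (G : SimpleGraph V) (η k : ℕ)
    (S : Set V) (hSk : S.ncard ≤ k)
    (F : RootedForest V Sᶜ) (hF : IsTDDecompOn G Sᶜ F) (hdepth : F.depth ≤ η) :
    (∀ x y, x ∈ Sᶜ → y ∈ Sᶜ → x ≠ y →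
      (G.Adj x y ∨ ∀ A, IsVertexCut G x y A → k + η + 1 ≤ A.ncard) →
      F.anc x y ∨ F.anc y x) ∧
    (∀ W : Set V, W ⊆ Sᶜ →
      (∀ x ∈ W, ∀ y ∈ W, x ≠ y →
        (G.Adj x y ∨ ∀ A, IsVertexCut G x y A → k + η + 1 ≤ A.ncard)) →
      (∀ x ∈ W, ∀ y ∈ W, F.anc x y ∨ F.anc y x) ∧ W.ncard ≤ η) := by
  have hm : (k + η : ℕ∞) ≤ (k + η + 1 : ℕ) := by exact_mod_cast Nat.le_succ (k + η)
  obtain ⟨hpair, hset⟩ := stmt4_general G η k S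
    (encard_le_coe_iff_finite_ncard_le.2 ⟨toFinite S, hSk⟩) F hF
    fun v => (RootedForest.encard_ancestors_le_depth v).trans (Nat.cast_le.2 hdepth)
  refine ⟨fun x y hx hy _ h => hpair x y hx hy (isInseparable_of_adj_or_le_ncard hm h),
    fun W hW h => ?_⟩
  exact (hset W hW fun x hx y hy hne => isInseparable_of_adj_or_le_ncard hm (h x hx y hy hne))
    |>.imp_right fun hcard => (encard_le_coe_iff_finite_ncard_le.1 hcard).2
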